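/- For every η > 0 there exists a constant C > 0 such that for all real x ≥ 3, the number of integers n with 3 ≤ n < x and n ∉ 𝒯 is at most C·x^{1/2+η}. -/

import Mathlib

/-- `ε(n) = (n + √(n² − 4))/2`. -/
noncomputable def eps (n : ℤ) : ℝ := ((n : ℝ) + Real.sqrt ((n : ℝ) ^ 2 - 4)) / 2

/-- The set `𝒯` of integers `n ≥ 3` such that `ε(n)` is not a proper power `ε(n₀)^k`
with `k ≥ 2`, `n₀ ≥ 3`. -/
def Tset : Set ℤ :=
  {n : ℤ | 3 ≤ n ∧ ¬ ∃ k : ℕ, 2 ≤ k ∧ ∃ n₀ : ℤ, 3 ≤ n₀ ∧ eps n = eps n₀ ^ k}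

/-!
If `n ≥ 3` is not in `𝒯`, then `ε(n) = ε(a + 1) ^ k` for some `a, k ≥ 2`, and
`a ≤ ε(a + 1)`, `ε(n) < n` give `a ^ k < n`. Since `n = ε(n) + ε(n)⁻¹` is determined by the pair
`(a, k)`, there are at most as many such `n ≤ N` as pairs with `a ^ k ≤ N`; these have `a ≤ √N` and
`k ≤ log₂ N`. The resulting bound `√x · log₂ x` is absorbed into `x ^ (1 / 2 + η)`.
-/

theorem eps_add_inv {n : ℤ} (hn : 2 ≤ |n|) : eps n + (eps n)⁻¹ = n := by
  have hsq : (4 : ℝ) ≤ (n : ℝ) ^ 2 := by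
    rw [← sq_abs]
    have : (2 : ℝ) ≤ |(n : ℝ)| := by exact_mod_cast hn
    nlinarith
  have hconj : eps n * ((n - √((n : ℝ) ^ 2 - 4)) / 2) = 1 := by
    have hsqrt := Real.sq_sqrt (sub_nonneg.mpr hsq)
    unfold eps
    linear_combination -hsqrt / 4
  rw [inv_eq_of_mul_eq_one_right hconj, eps]
  ring

theorem sub_one_le_eps {n : ℤ} (hn : 2 ≤ n) : (n : ℝ) - 1 ≤ eps n := by
  have hn' : (2 : ℝ) ≤ n := by exact_mod_cast hn
  have hsqrt : (n : ℝ) - 2 ≤ √((n : ℝ) ^ 2 - 4) := Real.le_sqrt_of_sq_le (by linarith)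
  unfold eps
  linarith

theorem eps_pos {n : ℤ} (hn : 2 ≤ n) : 0 < eps n := by
  have hn' : (2 : ℝ) ≤ n := by exact_mod_cast hn
  linarith [sub_one_le_eps hn]

theorem eps_lt_self {n : ℤ} (hn : 2 ≤ n) : eps n < n := by
  rw [← eps_add_inv (hn.trans (le_abs_self n))]
  exact lt_add_of_pos_right _ (inv_pos.mpr (eps_pos hn))

theorem eps_injOn : Set.InjOn eps {n | 2 ≤ |n|} := fun m hm n hn h => by
  have : (m : ℝ) = n := by rw [← eps_add_inv hm, ← eps_add_inv hn, h]
  exact_mod_cast this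

theorem exists_eps_eq_pow_of_notMem_Tset {n : ℤ} (hn : 3 ≤ n) (hT : n ∉ Tset) :
    ∃ a k : ℕ, 2 ≤ a ∧ 2 ≤ k ∧ (a : ℤ) ^ k < n ∧ eps n = eps (a + 1) ^ k := by
  obtain ⟨k, hk, m, hm, hpow⟩ := not_not.mp fun h => hT ⟨hn, h⟩
  obtain ⟨a, rfl⟩ : ∃ a : ℕ, m = a + 1 := ⟨(m - 1).toNat, by omega⟩
  refine ⟨a, k, by omega, hk, ?_, hpow⟩
  have ha : (a : ℝ) ≤ eps (a + 1) := by
    simpa using sub_one_le_eps (n := a + 1) (by omega)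
  have hlt : (a : ℝ) ^ k < n :=
    calc (a : ℝ) ^ k ≤ eps (a + 1) ^ k := by gcongr
      _ = eps n := hpow.symm
      _ < n := eps_lt_self (by omega)
  exact_mod_cast hlt

theorem le_sqrt_and_le_log_of_pow_le {a k N : ℕ} (ha : 2 ≤ a) (hk : 2 ≤ k) (h : a ^ k ≤ N) :
    a ≤ N.sqrt ∧ k ≤ Nat.log 2 N := by
  constructor
  · exact Nat.le_sqrt'.mpr ((Nat.pow_le_pow_right (by omega) hk).trans h)
  · exact Nat.le_log_of_pow_le one_lt_two ((Nat.pow_le_pow_left ha k).trans h)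

theorem ncard_notMem_Tset_le_sqrt_mul_log (N : ℕ) :
    {n : ℤ | 3 ≤ n ∧ n ≤ N ∧ n ∉ Tset}.ncard ≤ N.sqrt * Nat.log 2 N := by
  set S := {n : ℤ | 3 ≤ n ∧ n ≤ N ∧ n ∉ Tset}
  let pairs := Finset.Icc 1 N.sqrt ×ˢ Finset.Icc 1 (Nat.log 2 N)
  let epsPow : ℕ × ℕ → ℝ := fun p => eps (p.1 + 1) ^ p.2
  have hinj : S.InjOn eps :=
    eps_injOn.mono fun n hn => (by omega : (2 : ℤ) ≤ 3).trans (hn.1.trans (le_abs_self n))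
  have himage : eps '' S ⊆ epsPow '' pairs := by
    rintro _ ⟨n, ⟨hn, hnN, hT⟩, rfl⟩
    obtain ⟨a, k, ha, hk, hlt, hpow⟩ := exists_eps_eq_pow_of_notMem_Tset hn hT
    have hle : a ^ k ≤ N := by exact_mod_cast hlt.le.trans hnN
    obtain ⟨haN, hkN⟩ := le_sqrt_and_le_log_of_pow_le ha hk hle
    have hmem : (a, k) ∈ pairs := by
      simp only [pairs, Finset.mem_product, Finset.mem_Icc]
      omega
    exact ⟨(a, k), hmem, hpow.symm⟩
  calc S.ncard = (eps '' S).ncard := hinj.ncard_image.symm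
    _ ≤ (epsPow '' pairs).ncard := Set.ncard_le_ncard himage (pairs.finite_toSet.image _)
    _ ≤ (pairs : Set (ℕ × ℕ)).ncard := Set.ncard_image_le pairs.finite_toSet
    _ = pairs.card := Set.ncard_coe_finset pairs
    _ = N.sqrt * Nat.log 2 N := by simp [pairs]

theorem ncard_lt_notMem_Tset_le_sqrt_mul_logb {x : ℝ} (hx : 1 ≤ x) :
    ({n : ℤ | 3 ≤ n ∧ (n : ℝ) < x ∧ n ∉ Tset}.ncard : ℝ) ≤ √x * Real.logb 2 x := by
  set N := ⌊x⌋₊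
  have hNx : (N : ℝ) ≤ x := Nat.floor_le (by linarith)
  have hN : 0 < N := Nat.floor_pos.mpr hx
  have hsub : {n : ℤ | 3 ≤ n ∧ (n : ℝ) < x ∧ n ∉ Tset} ⊆ {n : ℤ | 3 ≤ n ∧ n ≤ N ∧ n ∉ Tset} := by
    rintro n ⟨hn, hnx, hT⟩
    lift n to ℕ using by omega
    exact ⟨hn, by exact_mod_cast Nat.le_floor (by exact_mod_cast hnx.le), hT⟩
  have hfinite : {n : ℤ | 3 ≤ n ∧ n ≤ N ∧ n ∉ Tset}.Finite :=
    (Set.finite_Icc 3 (N : ℤ)).subset fun n hn => ⟨hn.1, hn.2.1⟩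
  have hcard := (Set.ncard_le_ncard hsub hfinite).trans (ncard_notMem_Tset_le_sqrt_mul_log N)
  calc ({n : ℤ | 3 ≤ n ∧ (n : ℝ) < x ∧ n ∉ Tset}.ncard : ℝ)
      ≤ N.sqrt * Nat.log 2 N := by exact_mod_cast hcard
    _ ≤ √N * Real.logb 2 N := by
        gcongr
        · exact Real.nat_sqrt_le_real_sqrt
        · exact Real.natLog_le_logb N 2
    _ ≤ √x * Real.logb 2 x := by
        gcongr
        · exact Real.logb_nonneg one_lt_two (by exact_mod_cast hN)
        · exact one_lt_two

theorem sqrt_mul_logb_le_rpow {b x η : ℝ} (hb : 1 < b) (hx : 0 < x) (hη : 0 < η) :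
    √x * Real.logb b x ≤ (η * Real.log b)⁻¹ * x ^ ((1 : ℝ) / 2 + η) := by
  have hlogb : 0 < Real.log b := Real.log_pos hb
  calc √x * Real.logb b x ≤ √x * (x ^ η / η / Real.log b) := by
        unfold Real.logb
        gcongr
        exact Real.log_le_rpow_div hx.le hη
    _ = (η * Real.log b)⁻¹ * x ^ ((1 : ℝ) / 2 + η) := by
        rw [Real.rpow_add hx, Real.sqrt_eq_rpow]
        field_simp

/-- For every `η > 0` there is `C > 0` such that for all `x ≥ 3`, the number of
integers `3 ≤ n < x` with `n ∉ 𝒯` is at most `C·x^(1/2+η)`. -/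
theorem count_not_in_Tset (η : ℝ) (hη : 0 < η) :
    ∃ C : ℝ, 0 < C ∧ ∀ x : ℝ, 3 ≤ x →
      (({n : ℤ | 3 ≤ n ∧ (n : ℝ) < x ∧ n ∉ Tset}.ncard : ℝ)) ≤ C * x ^ ((1 : ℝ) / 2 + η) := by
  refine ⟨(η * Real.log 2)⁻¹, inv_pos.mpr (mul_pos hη (Real.log_pos one_lt_two)), fun x hx => ?_⟩
  exact (ncard_lt_notMem_Tset_le_sqrt_mul_logb (by linarith)).trans
    (sqrt_mul_logb_le_rpow one_lt_two (by linarith) hη)
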